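/- Let G be a simple graph with n vertices and e edges, and let c = 2e/n². Then the number N' of 4-edge walks in G satisfies N' ≤ max( (1−√(1−c))²·((c+1)√(1−c)+c), c^{5/2} )·n⁵. -/

import Mathlib

/-- The number of 4-edge walks in `G`: sequences of 5 (not necessarily distinct)
vertices with consecutive vertices adjacent. -/
noncomputable def walkCount4 {V : Type*} (G : SimpleGraph V) : ℕ :=
  Nat.card {f : Fin 5 → V // ∀ i : Fin 4, G.Adj (f i.castSucc) (f i.succ)}

noncomputable def PhiW (c : ℝ) : ℝ :=
  max ((1 - Real.sqrt (1 - c)) ^ 2 * ((c + 1) * Real.sqrt (1 - c) + c)) (c ^ ((5 : ℝ) / 2))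

lemma rpow_five_half (q : ℝ) (hq : 0 ≤ q) : (q ^ 2) ^ ((5 : ℝ) / 2) = q ^ 5 := by
  rw [← Real.rpow_natCast, ← Real.rpow_natCast, ← Real.rpow_mul hq]
  norm_num

/-- parametrisation of the bound -/
lemma PhiW_lower (c q x : ℝ) (hq : 0 ≤ q) (hx : x ≤ 1) (hcq : c = q ^ 2)
    (hcx : c = 2 * x - x ^ 2) :
    x ^ 2 * ((c + 1) * (1 - x) + c) ≤ PhiW c ∧ q ^ 5 ≤ PhiW c := by
  have h1 : Real.sqrt (1 - c) = 1 - x := by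
    rw [show 1 - c = (1 - x) ^ 2 by rw [hcx]; ring]
    exact Real.sqrt_sq (by linarith)
  constructor
  · unfold PhiW
    rw [h1]
    refine le_trans (le_of_eq ?_) (le_max_left _ _)
    ring
  · unfold PhiW
    refine le_trans (le_of_eq ?_) (le_max_right _ _)
    rw [hcq, rpow_five_half q hq]

lemma star_branch (a y c x r : ℝ) (hy : 0 ≤ y) (ha : a < 1)
    (hr : r = y * (1 - a)) (hcr : c = a ^ 2 + 2 * r) (hcx : c = 2 * x - x ^ 2)
    (hyx : y ≤ x) (hC : (a + x) * (4 * x + a ^ 2 - x ^ 2) ≤ 2 * x) :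
    a * c ^ 2 + r * (y - (2 * c - r) * (a - y)) ≤ x ^ 2 * ((c + 1) * (1 - x) + c) := by
  have hr0 : 0 ≤ r := by rw [hr]; exact mul_nonneg hy (by linarith)
  have hk : 0 ≤ 2 * c - r := by nlinarith [sq_nonneg a]
  have h1 : r * (y - (2 * c - r) * (a - y)) ≤ r * (x - (2 * c - r) * (a - x)) := by
    apply mul_le_mul_of_nonneg_left _ hr0
    nlinarith [mul_nonneg hk (sub_nonneg.2 hyx)]
  have hr2 : r = x * (1 - a) - (a - x) ^ 2 / 2 := by linear_combination (1/2) * hcx - (1/2) * hcr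
  have h2 : a * c ^ 2 + r * (x - (2 * c - r) * (a - x)) ≤ x ^ 2 * ((c + 1) * (1 - x) + c) := by
    have h3 : 0 ≤ (a - x) ^ 2 * (2 * x - (a + x) * (4 * x + a ^ 2 - x ^ 2)) :=
      mul_nonneg (sq_nonneg _) (by linarith)
    have : x ^ 2 * ((c + 1) * (1 - x) + c) - (a * c ^ 2 + r * (x - (2 * c - r) * (a - x)))
      = (a - x) ^ 2 * (2 * x - (a + x) * (4 * x + a ^ 2 - x ^ 2)) / 4 := by
      rw [hr2, hcx]; ring
    linarith
  linarith

/-- the quadratic in `q` -/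
noncomputable def GG (t q : ℝ) : ℝ :=
  t * (1 + t ^ 2) ^ 2 * q * (1 - q * t) + (1 - t ^ 2) ^ 2 * (1 + q ^ 2 * (3 + t ^ 2) / 2)
    - 4 * q * (1 - q * t)

lemma GG_convex (t q l u : ℝ) (ht : 0 ≤ t) (ht1 : t ≤ 1) (hl : l ≤ q) (hu : q ≤ u)
    (h1 : GG t l ≤ 0) (h2 : GG t u ≤ 0) : GG t q ≤ 0 := by
  have hcoef : 0 ≤ (1 - t ^ 2) ^ 2 * (3 + t ^ 2) / 2 + t * (4 - t * (1 + t ^ 2) ^ 2) := by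
    have : t * (1 + t ^ 2) ^ 2 ≤ 1 * 2 ^ 2 := by
      apply mul_le_mul ht1 _ (by positivity) (by norm_num)
      apply pow_le_pow_left₀ (by positivity); nlinarith
    have := mul_nonneg ht (sub_nonneg.2 this)
    have : 0 ≤ (1 - t ^ 2) ^ 2 * (3 + t ^ 2) / 2 := by positivity
    linarith
  rcases eq_or_lt_of_le (hl.trans hu) with h | h
  · have : q = l := by linarith
    rw [this]; exact h1
  · have key : (u - l) * GG t q = (u - q) * GG t l + (q - l) * GG t u
      - (u - q) * (q - l) * (u - l) * ((1 - t ^ 2) ^ 2 * (3 + t ^ 2) / 2 + t * (4 - t * (1 + t ^ 2) ^ 2)) := by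
      unfold GG; ring
    have e1 := mul_nonneg (mul_nonneg (mul_nonneg (sub_nonneg.2 hu) (sub_nonneg.2 hl)) (sub_nonneg.2 h.le)) hcoef
    have e2 := mul_nonneg (sub_nonneg.2 hu) (neg_nonneg.2 h1)
    have e3 := mul_nonneg (sub_nonneg.2 hl) (neg_nonneg.2 h2)
    by_contra hh
    push Not at hh
    have := mul_pos (sub_pos.2 h) hh
    nlinarith

lemma GG_one (t : ℝ) (ht : 0 ≤ t) (ht1 : t ≤ 1) : GG t 1 ≤ 0 := by
  have : GG t 1 = - ((1 - t) ^ 3 * (3 - t - t ^ 2 - t ^ 3)) / 2 := by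
    unfold GG; ring
  have h2 : 0 ≤ 3 - t - t ^ 2 - t ^ 3 := by
    have : t ^ 2 ≤ 1 := by nlinarith
    have : t ^ 3 ≤ 1 := pow_le_one₀ ht ht1
    linarith
  have := mul_nonneg (pow_nonneg (sub_nonneg.2 ht1) 3) h2
  linarith

lemma GG_03 (t : ℝ) (ht : 0 ≤ t) (ht1 : t ≤ 1) : GG t (3/10) ≤ 0 := by
  unfold GG
  nlinarith [sq_nonneg (t - 1/5), sq_nonneg (t^2), sq_nonneg (t^3), mul_nonneg ht (sub_nonneg.2 ht1), pow_nonneg ht 3]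

lemma GG_025 (t : ℝ) (ht : 3/5 ≤ t) (ht1 : t ≤ 1) : GG t (1/4) ≤ 0 := by
  have e : GG t (1/4) = - (1 - t) * ((1 - t / 4) * (4 + 3 * t + 3 * t ^ 2 + t ^ 3 + t ^ 4) / 4
      - (1 - t) * (1 + t) ^ 2 * (1 + (3 + t ^ 2) / 32)) := by
    unfold GG; ring
  have h1 : (27 : ℝ) / 20 ≤ (1 - t / 4) * (4 + 3 * t + 3 * t ^ 2 + t ^ 3 + t ^ 4) / 4 := by
    have t2 : (3/5 : ℝ) ^ 2 ≤ t ^ 2 := pow_le_pow_left₀ (by norm_num) ht 2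
    have t3 : (3/5 : ℝ) ^ 3 ≤ t ^ 3 := pow_le_pow_left₀ (by norm_num) ht 3
    have t4 : (3/5 : ℝ) ^ 4 ≤ t ^ 4 := pow_le_pow_left₀ (by norm_num) ht 4
    have : (3/4 : ℝ) * (36/5) ≤ (1 - t / 4) * (4 + 3 * t + 3 * t ^ 2 + t ^ 3 + t ^ 4) := by
      apply mul_le_mul (by linarith) (by linarith) (by norm_num) (by linarith)
    linarith
  have h2 : (1 - t) * (1 + t) ^ 2 ≤ 6/5 - 1/8 := by
    nlinarith [mul_nonneg (sub_nonneg.2 ht) (sub_nonneg.2 ht1), mul_nonneg (mul_nonneg (sub_nonneg.2 ht) (sub_nonneg.2 ht)) (sub_nonneg.2 ht1)]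
  have h3 : (1 - t) * (1 + t) ^ 2 * (1 + (3 + t ^ 2) / 32) ≤ (6/5 - 1/8) * (9/8) := by
    apply mul_le_mul h2 (by nlinarith) (by positivity) (by norm_num)
  rw [e]
  nlinarith [mul_nonneg (sub_nonneg.2 ht1) (by linarith : 0 ≤ (1 - t / 4) * (4 + 3 * t + 3 * t ^ 2 + t ^ 3 + t ^ 4) / 4
      - (1 - t) * (1 + t) ^ 2 * (1 + (3 + t ^ 2) / 32))]

lemma clique_branch (a y c q r t : ℝ) (ha : a < 1)
    (hr : r = y * (1 - a)) (hcr : c = a ^ 2 + 2 * r) (hcq : c = q ^ 2)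
    (hat : a = q * t) (hG : GG t q ≤ 0) :
    a * c ^ 2 + r * (y - (2 * c - r) * (a - y)) ≤ q ^ 5 := by
  have hr2 : r = (q ^ 2 - (q * t) ^ 2) / 2 := by rw [← hat, ← hcq]; linarith
  have key : (1 - a) * (q ^ 5 - (a * c ^ 2 + r * (y - (2 * c - r) * (a - y)))) = - q ^ 4 * GG t q / 4 := by
    have : (1 - a) * (q ^ 5 - (a * c ^ 2 + r * (y - (2 * c - r) * (a - y))))
      = (1 - a) * (q ^ 5 - (a * c ^ 2)) - r * (r - (2 * c - r) * (a * (1 - a) - r)) := by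
      rw [hr]; ring
    rw [this, hr2, hcq, hat]; unfold GG; ring
  have h4 : 0 ≤ q ^ 4 := by positivity
  have h5 : 0 ≤ (1 - a) * (q ^ 5 - (a * c ^ 2 + r * (y - (2 * c - r) * (a - y)))) := by
    rw [key]; nlinarith
  have := nonneg_of_mul_nonneg_right h5 (by linarith : 0 < 1 - a)
  linarith

lemma E1_bound (a y c q r x : ℝ) (hy : 0 ≤ y) (ha0 : 0 < a) (ha : a < 1)
    (hr : r = y * (1 - a)) (hcr : c = a ^ 2 + 2 * r) (hcx : c = 2 * x - x ^ 2)
    (hcq : c = q ^ 2) (hq : 0 < q) (hq1 : q ≤ 1) (hx : 0 < x) (hx1 : x ≤ 1)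
    (hyx : y ≤ x) :
    a * c ^ 2 + r * (y - (2 * c - r) * (a - y)) ≤ PhiW c := by
  obtain ⟨P1, P2⟩ := PhiW_lower c q x hq.le hx1 hcq hcx
  have hr0 : 0 ≤ r := by rw [hr]; exact mul_nonneg hy (by linarith)
  have haq : a ≤ q := by
    apply le_of_sq_le_sq _ hq.le
    linarith
  obtain ⟨t, hat⟩ : ∃ t, a = q * t := ⟨a / q, by field_simp⟩
  have ht0 : 0 < t := pos_of_mul_pos_right (hat ▸ ha0) hq.le
  have ht1 : t ≤ 1 := by
    refine le_of_mul_le_mul_left ?_ hq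
    linarith
  have t2 : t ^ 2 ≤ 1 := pow_le_one₀ ht0.le ht1
  have ax2 : a ^ 2 ≤ 2 * t ^ 2 * x := by
    have : a ^ 2 = t ^ 2 * (2 * x - x ^ 2) := by rw [← hcx, hcq, hat]; ring
    rw [this]; nlinarith only [mul_nonneg (sq_nonneg t) (sq_nonneg x)]
  have reduce : (a + x) * (4 + 2 * t ^ 2) ≤ 2 → (a + x) * (4 * x + a ^ 2 - x ^ 2) ≤ 2 * x := by
    intro h
    have h1 : (a + x) * (4 * x + a ^ 2 - x ^ 2) ≤ (a + x) * (4 * x + 2 * t ^ 2 * x) := by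
      apply mul_le_mul_of_nonneg_left _ (by linarith)
      linarith [sq_nonneg x]
    nlinarith only [h1, h, hx]
  rcases le_total q (1/4) with h | h
  · refine (star_branch a y c x r hy ha hr hcr hcx hyx (reduce ?_)).trans P1
    have hx3 : x ≤ 1/30 := by
      have hq2 : q ^ 2 ≤ (1/4) ^ 2 := pow_le_pow_left₀ hq.le h 2
      have : x * (2 - x) ≤ (1/4) ^ 2 := by linarith
      by_contra hh; push Not at hh
      nlinarith only [this, hh, hx1]
    have : (a + x) * (4 + 2 * t ^ 2) ≤ (1/4 + 1/30) * 6 := by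
      apply mul_le_mul (by linarith) (by linarith) (by positivity) (by norm_num)
    linarith
  · rcases le_total q (3/10) with h2 | h2
    · rcases le_total t (3/5) with h3 | h3
      · refine (star_branch a y c x r hy ha hr hcr hcx hyx (reduce ?_)).trans P1
        have hx3 : x ≤ 1/20 := by
          have hq2 : q ^ 2 ≤ (3/10) ^ 2 := pow_le_pow_left₀ hq.le h2 2
          have : x * (2 - x) ≤ (3/10) ^ 2 := by linarith
          by_contra hh; push Not at hh
          nlinarith only [this, hh, hx1]
        have : (a + x) * (4 + 2 * t ^ 2) ≤ (9/50 + 1/20) * 5 := by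
          have t4 : t ^ 2 ≤ (3/5) ^ 2 := pow_le_pow_left₀ ht0.le h3 2
          have : q * t ≤ (3/10) * (3/5) := mul_le_mul h2 h3 ht0.le (by norm_num)
          apply mul_le_mul (by linarith) (by linarith) (by positivity) (by norm_num)
        linarith
      · exact (clique_branch a y c q r t ha hr hcr hcq hat
          (GG_convex t q _ _ ht0.le ht1 h hq1 (GG_025 t h3 ht1) (GG_one t ht0.le ht1))).trans P2
    · exact (clique_branch a y c q r t ha hr hcr hcq hat
          (GG_convex t q _ _ ht0.le ht1 h2 hq1 (GG_03 t ht0.le ht1) (GG_one t ht0.le ht1))).trans P2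

lemma E2_bound (a c q r x : ℝ) (ha0 : 0 < a) (hr0 : 0 ≤ r)
    (hcr : c = a ^ 2 + 2 * r) (hcx : c = 2 * x - x ^ 2)
    (hcq : c = q ^ 2) (hq : 0 < q) (hx : 0 < x) (hx1 : x ≤ 1)
    (hxa : x ≤ a) :
    a * c ^ 2 + r * ((a ^ 2 + r) ^ 2 / a) ≤ PhiW c := by
  obtain ⟨P1, P2⟩ := PhiW_lower c q x hq.le hx1 hcq hcx
  have hr2 : r = (q ^ 2 - a ^ 2) / 2 := by linarith
  have haq : a ≤ q := by
    apply le_of_sq_le_sq _ hq.le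
    linarith
  obtain ⟨t, hat⟩ : ∃ t, a = q * t := ⟨a / q, by field_simp⟩
  obtain ⟨t₀, hxt⟩ : ∃ t, x = q * t := ⟨x / q, by field_simp⟩
  have ht0 : 0 < t := by
    by_contra h; push Not at h; nlinarith
  have ht00 : 0 < t₀ := by
    by_contra h; push Not at h; nlinarith
  have ht1 : t ≤ 1 := by
    by_contra h; push Not at h; nlinarith
  have htt : t₀ ≤ t := by
    by_contra h; push Not at h; nlinarith
  have form : a * c ^ 2 + r * ((a ^ 2 + r) ^ 2 / a)
      = q ^ 5 * (9 * t / 8 + 1 / (8 * t) - t ^ 3 / 8 - t ^ 5 / 8) := by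
    rw [hr2, hat, hcq]; field_simp; ring
  have q5 : 0 < q ^ 5 := by positivity
  rw [form]
  rcases le_total (1/5) t with h | h
  · refine le_trans ?_ P2
    have : 9 * t / 8 + 1 / (8 * t) - t ^ 3 / 8 - t ^ 5 / 8 ≤ 1 := by
      rw [← sub_nonneg]
      have e : 1 - (9 * t / 8 + 1 / (8 * t) - t ^ 3 / 8 - t ^ 5 / 8)
        = (1 - t) ^ 2 * (t ^ 4 + 2 * t ^ 3 + 4 * t ^ 2 + 6 * t - 1) / (8 * t) := by
        field_simp; ring
      rw [e]
      apply div_nonneg _ (by positivity)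
      apply mul_nonneg (sq_nonneg _)
      have : 0 ≤ t ^ 4 + 2 * t ^ 3 + 4 * t ^ 2 := by positivity
      linarith
    nlinarith
  · refine le_trans ?_ P1
    have e : x ^ 2 * ((c + 1) * (1 - x) + c) = q ^ 5 * (9 * t₀ / 8 + 1 / (8 * t₀) - t₀ ^ 3 / 8 - t₀ ^ 5 / 8) := by
      have e1 : x ^ 2 * ((c + 1) * (1 - x) + c) = x * c ^ 2 + (c - x ^ 2) / 2 * ((x ^ 2 + (c - x ^ 2) / 2) ^ 2 / x) := by
        rw [hcx]; field_simp; ring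
      rw [e1, hxt, hcq]; field_simp; ring
    rw [e]
    apply mul_le_mul_of_nonneg_left _ q5.le
    have p3 : t₀ ^ 3 ≤ t ^ 3 := pow_le_pow_left₀ ht00.le htt 3
    have p5 : t₀ ^ 5 ≤ t ^ 5 := pow_le_pow_left₀ ht00.le htt 5
    have : 9 * t / 8 + 1 / (8 * t) ≤ 9 * t₀ / 8 + 1 / (8 * t₀) := by
      rw [← sub_nonneg]
      have e : 9 * t₀ / 8 + 1 / (8 * t₀) - (9 * t / 8 + 1 / (8 * t)) = (t - t₀) * (1 - 9 * t * t₀) / (8 * t * t₀) := by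
        field_simp; ring
      rw [e]
      apply div_nonneg _ (by positivity)
      apply mul_nonneg (by linarith)
      nlinarith
    linarith

lemma PhiW_nonneg (c : ℝ) (hc : 0 ≤ c) : 0 ≤ PhiW c :=
  le_trans (Real.rpow_nonneg hc _) (le_max_right _ _)

lemma pointwise_bound (a y r κ m g L1 L2 L : ℝ) (ha0 : 0 < a) (hκ : 0 ≤ κ)
    (hr : r = y * (1 - a)) (hm0 : 0 ≤ m) (hma : m ≤ a)
    (hg0 : 0 ≤ g) (hg1 : g ≤ m) (hg2 : g ≤ a * m + r)
    (h1 : L1 = y - κ * (a - y)) (h2 : L2 = (a ^ 2 + r) ^ 2 / a) (hL1 : L1 ≤ L) (hL2 : L2 ≤ L) (hy : 0 ≤ y) :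
    g ^ 2 - κ * (m * (a - m)) ≤ m * L := by
  rcases le_or_gt m y with h | h
  · have e1 : g ^ 2 ≤ m ^ 2 := pow_le_pow_left₀ hg0 hg1 2
    have e2 : m * L1 ≤ m * L := mul_le_mul_of_nonneg_left hL1 hm0
    have e3 : 0 ≤ m * ((1 + κ) * (y - m)) := by
      apply mul_nonneg hm0 (mul_nonneg (by linarith) (by linarith))
    rw [h1] at e2
    nlinarith only [e1, e2, e3]
  · have e1 : g ^ 2 ≤ (a * m + r) ^ 2 := pow_le_pow_left₀ hg0 hg2 2
    have hay : 0 < a - y := by linarith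
    have fa : (a ^ 2 + r) ^ 2 = a * L2 := by rw [h2]; field_simp
    have key : (a - y) * ((a * m + r) ^ 2 - κ * (m * (a - m)))
      = (a - m) * (y * L1) + (m - y) * (a * L2) - (a ^ 2 + κ) * ((m - y) * (a - m) * (a - y)) := by
      rw [← fa, h1, hr]; ring
    have e2 : 0 ≤ (a ^ 2 + κ) * ((m - y) * (a - m) * (a - y)) := by
      apply mul_nonneg (by positivity)
      exact mul_nonneg (mul_nonneg (by linarith) (by linarith)) hay.le
    have e3 : (a - m) * (y * L1) ≤ (a - m) * (y * L) :=
      mul_le_mul_of_nonneg_left (mul_le_mul_of_nonneg_left hL1 hy) (by linarith)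
    have e4 : (m - y) * (a * L2) ≤ (m - y) * (a * L) :=
      mul_le_mul_of_nonneg_left (mul_le_mul_of_nonneg_left hL2 ha0.le) (by linarith)
    have e5 : (a - y) * ((a * m + r) ^ 2 - κ * (m * (a - m))) ≤ (a - y) * (m * L) := by
      rw [key]; linarith
    have := le_of_mul_le_mul_left e5 hay
    linarith

lemma core_bound {ι : Type*} (A B : Finset ι) (n a r c : ℝ) (hn : 0 < n) (g m τ : ι → ℝ)
    (hA : (A.card : ℝ) = n * a) (hB : ∑ v ∈ B, m v = n * r) (ha0 : 0 ≤ a) (ha1 : a ≤ 1)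
    (hr0 : 0 ≤ r) (hra : r ≤ a * (1 - a)) (hcr : c = a ^ 2 + 2 * r)
    (hm0 : ∀ v ∈ B, 0 ≤ m v) (hma : ∀ v ∈ B, m v ≤ a)
    (hgA0 : ∀ v ∈ A, 0 ≤ g v) (hgA : ∀ v ∈ A, g v ≤ c - τ v)
    (hτ0 : ∀ v ∈ A, 0 ≤ τ v) (hτr : ∀ v ∈ A, τ v ≤ r)
    (hτ : ∑ v ∈ A, τ v = ∑ v ∈ B, m v * (a - m v))
    (hgB0 : ∀ v ∈ B, 0 ≤ g v) (hgB1 : ∀ v ∈ B, g v ≤ m v) (hgB2 : ∀ v ∈ B, g v ≤ a * m v + r) :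
    ∑ v ∈ A, g v ^ 2 + ∑ v ∈ B, g v ^ 2 ≤ n * PhiW c := by
  have hc0 : 0 ≤ c := by rw [hcr]; positivity
  have hAsum : ∑ v ∈ A, g v ^ 2 ≤ n * (a * c ^ 2) - (2 * c - r) * ∑ v ∈ A, τ v := by
    have : ∑ v ∈ A, g v ^ 2 ≤ ∑ v ∈ A, (c ^ 2 - (2 * c - r) * τ v) := by
      apply Finset.sum_le_sum
      intro v hv
      have e1 : g v ^ 2 ≤ (c - τ v) ^ 2 := pow_le_pow_left₀ (hgA0 v hv) (hgA v hv) 2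
      have e2 : 0 ≤ τ v * (r - τ v) := mul_nonneg (hτ0 v hv) (sub_nonneg.2 (hτr v hv))
      nlinarith only [e1, e2]
    refine this.trans (le_of_eq ?_)
    rw [Finset.sum_sub_distrib, Finset.sum_const, nsmul_eq_mul, hA, Finset.mul_sum]
    ring
  rcases eq_or_lt_of_le hr0 with hr0' | hrpos
  · -- degenerate case
    have hmz : ∀ v ∈ B, m v = 0 := by
      rw [← hr0', mul_zero] at hB
      exact (Finset.sum_eq_zero_iff_of_nonneg hm0).1 hB
    have hBs : ∑ v ∈ B, g v ^ 2 = 0 := by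
      apply Finset.sum_eq_zero
      intro v hv
      have h1 := hgB1 v hv
      rw [hmz v hv] at h1
      have : g v = 0 := le_antisymm h1 (hgB0 v hv)
      rw [this]; norm_num
    have hτz : ∑ v ∈ A, τ v = 0 := by
      rw [hτ]
      apply Finset.sum_eq_zero
      intro v hv
      rw [hmz v hv]; ring
    rw [hBs, add_zero]
    rw [hτz, mul_zero, sub_zero] at hAsum
    refine hAsum.trans (mul_le_mul_of_nonneg_left ?_ hn.le)
    have : c = a ^ 2 := by rw [hcr, ← hr0']; ring
    refine le_trans (le_of_eq ?_) (le_max_right _ _)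
    rw [this, rpow_five_half a ha0]
    ring
  · have hapos : 0 < a := by
      rcases eq_or_lt_of_le ha0 with h | h
      · rw [← h] at hra; linarith
      · exact h
    have ha1' : a < 1 := by
      rcases eq_or_lt_of_le ha1 with h | h
      · rw [h] at hra; linarith
      · exact h
    have hcpos : 0 < c := by rw [hcr]; positivity
    have hc1 : (1 - a) ^ 2 ≤ 1 - c := by rw [hcr]; linarith
    have h1c : 0 ≤ 1 - c := le_trans (sq_nonneg _) hc1
    set s := Real.sqrt (1 - c) with hs
    have hs2 : s ^ 2 = 1 - c := Real.sq_sqrt h1c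
    have hs0 : 0 ≤ s := Real.sqrt_nonneg _
    have hsa : 1 - a ≤ s := Real.le_sqrt_of_sq_le hc1
    have hs1 : s < 1 := by
      by_contra h; push Not at h
      nlinarith
    obtain ⟨x, hx⟩ : ∃ x, x = 1 - s := ⟨_, rfl⟩
    have hcx : c = 2 * x - x ^ 2 := by rw [hx]; linear_combination hs2
    have hq2 : c = Real.sqrt c ^ 2 := (Real.sq_sqrt hc0).symm
    have hqpos : 0 < Real.sqrt c := Real.sqrt_pos.2 hcpos
    have hq1 : Real.sqrt c ≤ 1 := Real.sqrt_le_one.2 (by linarith)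
    obtain ⟨y, hy⟩ : ∃ y, r = y * (1 - a) := ⟨r / (1 - a), by
      have : 1 - a ≠ 0 := by linarith
      field_simp⟩
    have hy0 : 0 < y := pos_of_mul_pos_left (hy ▸ hrpos) (by linarith)
    have hyx : y ≤ x := by
      have : (1 - a) * (2 * (x - y)) = (a - x) ^ 2 := by
        linear_combination hcr - hcx + 2 * hy
      have h2 : 0 ≤ (1 - a) * (2 * (x - y)) := by rw [this]; positivity
      have := nonneg_of_mul_nonneg_right h2 (by linarith : 0 < 1 - a)
      linarith
    have E1 := E1_bound a y c (Real.sqrt c) r x hy0.le hapos ha1' hy hcr hcx hq2 hqpos hq1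
      (by linarith) (by linarith) hyx
    have E2 := E2_bound a c (Real.sqrt c) r x hapos hr0 hcr hcx hq2 hqpos
      (by linarith) (by linarith) (by linarith)
    set L1 := y - (2 * c - r) * (a - y) with hL1
    set L2 := (a ^ 2 + r) ^ 2 / a with hL2
    have hκ : 0 ≤ 2 * c - r := by rw [hcr]; nlinarith [sq_nonneg a]
    have hBsum : ∑ v ∈ B, g v ^ 2 ≤ (2 * c - r) * ∑ v ∈ B, m v * (a - m v) + n * r * max L1 L2 := by
      rw [← hB, Finset.mul_sum, Finset.sum_mul, ← Finset.sum_add_distrib]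
      apply Finset.sum_le_sum
      intro v hv
      have := pointwise_bound a y r (2 * c - r) (m v) (g v) L1 L2 (max L1 L2) hapos hκ hy
        (hm0 v hv) (hma v hv) (hgB0 v hv) (hgB1 v hv) (hgB2 v hv) hL1 hL2 (le_max_left _ _)
        (le_max_right _ _) hy0.le
      linarith
    have hfin : a * c ^ 2 + r * max L1 L2 ≤ PhiW c := by
      rcases max_choice L1 L2 with h | h <;> rw [h]
      · exact E1
      · exact E2
    have := mul_le_mul_of_nonneg_left hfin hn.le
    rw [hτ] at hAsum
    linarith

section graphpart
open Classical Finset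

noncomputable def adjM {V : Type*} (G : SimpleGraph V) (u v : V) : ℝ := if G.Adj u v then 1 else 0

noncomputable def degR {V : Type*} [Fintype V] (G : SimpleGraph V) (u : V) : ℝ := ∑ v, adjM G u v

noncomputable def gR {V : Type*} [Fintype V] (G : SimpleGraph V) (u : V) : ℝ :=
  ∑ v, adjM G u v * degR G v

noncomputable def WR {V : Type*} [Fintype V] (G : SimpleGraph V) : ℝ := ∑ v, gR G v ^ 2

variable {V : Type*}

lemma adjM_symm (G : SimpleGraph V) (u v : V) : adjM G u v = adjM G v u := by
  unfold adjM; simp [G.adj_comm]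

lemma adjM_self (G : SimpleGraph V) (u : V) : adjM G u u = 0 := by
  unfold adjM; simp

lemma adjM_nonneg (G : SimpleGraph V) (u v : V) : 0 ≤ adjM G u v := by
  unfold adjM; split_ifs <;> norm_num

lemma adjM_le_one (G : SimpleGraph V) (u v : V) : adjM G u v ≤ 1 := by
  unfold adjM; split_ifs <;> norm_num

lemma adjM_or (G : SimpleGraph V) (u v : V) : adjM G u v = 0 ∨ adjM G u v = 1 := by
  unfold adjM; split_ifs <;> simp

lemma degR_nonneg [Fintype V] (G : SimpleGraph V) (u : V) : 0 ≤ degR G u :=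
  Finset.sum_nonneg fun v _ => adjM_nonneg G u v

lemma gR_nonneg [Fintype V] (G : SimpleGraph V) (u : V) : 0 ≤ gR G u :=
  Finset.sum_nonneg fun v _ => mul_nonneg (adjM_nonneg G u v) (degR_nonneg G v)

/-- Kelmans shift from `u` to `v`. -/
def kelAdj (G : SimpleGraph V) (u v : V) (x y : V) : Prop :=
  if x = v then (if y = u then G.Adj u v else if y = v then False else G.Adj u y ∨ G.Adj v y)
  else if x = u then (if y = v then G.Adj u v else if y = u then False else G.Adj u y ∧ G.Adj v y)
  else if y = v then G.Adj u x ∨ G.Adj v x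
  else if y = u then G.Adj u x ∧ G.Adj v x
  else G.Adj x y

def kel (G : SimpleGraph V) (u v : V) (huv : u ≠ v) : SimpleGraph V where
  Adj := kelAdj G u v
  symm := ⟨by
    intro x y h
    unfold kelAdj at *
    have := G.adj_comm x y
    grind⟩
  loopless := ⟨by
    intro x h
    unfold kelAdj at h
    have := G.loopless.irrefl x
    grind⟩

lemma sum_split [Fintype V] (u v : V) (huv : u ≠ v) (F : V → ℝ) :
    ∑ x, F x = F u + F v + ∑ x ∈ (univ \ {u, v} : Finset V), F x := by
  rw [← Finset.sum_sdiff (Finset.subset_univ ({u, v} : Finset V)), Finset.sum_pair huv]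
  ring

section
variable (G : SimpleGraph V) (u v : V) (huv : u ≠ v)

lemma kel_uv : adjM (kel G u v huv) u v = adjM G u v := by
  unfold adjM kel kelAdj; simp [huv]

lemma kel_uw (w : V) (h1 : w ≠ u) (h2 : w ≠ v) :
    adjM (kel G u v huv) u w = adjM G u w * adjM G v w := by
  unfold adjM kel kelAdj; simp [huv, h1, h2]
  split_ifs <;> simp_all

lemma kel_vw (w : V) (h1 : w ≠ u) (h2 : w ≠ v) :
    adjM (kel G u v huv) v w = adjM G u w + adjM G v w - adjM G u w * adjM G v w := by
  unfold adjM kel kelAdj; simp [h1, h2]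
  split_ifs <;> simp_all

lemma kel_wz (w z : V) (h1 : w ≠ u) (h2 : w ≠ v) (h3 : z ≠ u) (h4 : z ≠ v) :
    adjM (kel G u v huv) w z = adjM G w z := by
  unfold adjM kel kelAdj; simp [h1, h2, h3, h4]

end

/-- The shift keeps the number of edges, does not decrease `WR`, and changes the sum of squared
degrees by twice the product of the private neighbourhood sizes. -/
lemma kel_main [Fintype V] (G : SimpleGraph V) (u v : V) (huv : u ≠ v) :
    (∑ x, degR (kel G u v huv) x = ∑ x, degR G x) ∧ WR G ≤ WR (kel G u v huv) ∧
    ∑ x, degR (kel G u v huv) x ^ 2 = ∑ x, degR G x ^ 2 +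
      2 * (∑ w ∈ (univ \ {u, v} : Finset V), adjM G u w * (1 - adjM G v w)) *
        (∑ w ∈ (univ \ {u, v} : Finset V), adjM G v w * (1 - adjM G u w)) := by
  set K := kel G u v huv with hK
  set T : Finset V := univ \ {u, v} with hT
  have hT' : ∀ w ∈ T, w ≠ u ∧ w ≠ v := by
    intro w hw; simp [hT] at hw; exact hw
  set P := ∑ w ∈ T, adjM G u w * (1 - adjM G v w) with hP
  set Q := ∑ w ∈ T, adjM G v w * (1 - adjM G u w) with hQ
  have hP0 : 0 ≤ P := Finset.sum_nonneg fun w _ =>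
    mul_nonneg (adjM_nonneg _ _ _) (sub_nonneg.2 (adjM_le_one _ _ _))
  have hQ0 : 0 ≤ Q := Finset.sum_nonneg fun w _ =>
    mul_nonneg (adjM_nonneg _ _ _) (sub_nonneg.2 (adjM_le_one _ _ _))
  -- degrees
  have dw : ∀ w ∈ T, degR K w = degR G w := by
    intro w hw
    obtain ⟨h1, h2⟩ := hT' w hw
    unfold degR
    rw [sum_split u v huv, sum_split u v huv (fun x => adjM G w x)]
    rw [adjM_symm K w u, adjM_symm K w v, kel_uw G u v huv w h1 h2, kel_vw G u v huv w h1 h2,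
      adjM_symm G w u, adjM_symm G w v]
    rw [Finset.sum_congr rfl (fun z hz => kel_wz G u v huv w z h1 h2 (hT' z hz).1 (hT' z hz).2)]
    ring
  have du : degR K u = degR G u - P := by
    unfold degR
    rw [sum_split u v huv, sum_split u v huv (fun x => adjM G u x), hP]
    rw [Finset.sum_congr rfl (fun w hw => kel_uw G u v huv w (hT' w hw).1 (hT' w hw).2)]
    rw [kel_uv, adjM_self, adjM_self, add_sub_assoc, ← Finset.sum_sub_distrib]
    congr 1
    apply Finset.sum_congr rfl; intro w _; ring
  have dv : degR K v = degR G v + P := by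
    unfold degR
    rw [sum_split u v huv, sum_split u v huv (fun x => adjM G v x), hP]
    rw [Finset.sum_congr rfl (fun w hw => kel_vw G u v huv w (hT' w hw).1 (hT' w hw).2)]
    rw [adjM_symm K v u, adjM_symm G v u, kel_uv, adjM_self, adjM_self, add_assoc (_ + _),
      ← Finset.sum_add_distrib]
    congr 1
    apply Finset.sum_congr rfl; intro w _; ring
  have dd : degR G u - degR G v = P - Q := by
    unfold degR
    rw [sum_split u v huv, sum_split u v huv (fun x => adjM G v x), hP, hQ,
      adjM_symm G v u, adjM_self, adjM_self, ← Finset.sum_sub_distrib]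
    have : ∑ w ∈ T, (adjM G u w * (1 - adjM G v w) - adjM G v w * (1 - adjM G u w))
      = ∑ w ∈ T, adjM G u w - ∑ w ∈ T, adjM G v w := by
      rw [← Finset.sum_sub_distrib]
      apply Finset.sum_congr rfl; intro w _; ring
    rw [this]; ring
  refine ⟨?_, ?_, ?_⟩
  · rw [sum_split u v huv, sum_split u v huv (degR G), du, dv, Finset.sum_congr rfl dw]
    ring
  · -- walks
    have gw : ∀ w ∈ T, gR G w ≤ gR K w := by
      intro w hw
      obtain ⟨h1, h2⟩ := hT' w hw
      unfold gR
      rw [sum_split u v huv, sum_split u v huv (fun x => adjM K w x * _)]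
      rw [adjM_symm K w u, adjM_symm K w v, kel_uw G u v huv w h1 h2, kel_vw G u v huv w h1 h2,
        adjM_symm G w u, adjM_symm G w v]
      rw [Finset.sum_congr rfl (fun z hz => show adjM K w z * degR K z = adjM G w z * degR G z by
        rw [kel_wz G u v huv w z h1 h2 (hT' z hz).1 (hT' z hz).2, dw z hz]), du, dv]
      rcases adjM_or G u w with e1 | e1 <;> rcases adjM_or G v w with e2 | e2 <;> rw [e1, e2] <;>
        linarith
    set SP := ∑ w ∈ T, adjM G u w * (1 - adjM G v w) * degR G w with hSP
    set SQ := ∑ w ∈ T, adjM G v w * (1 - adjM G u w) * degR G w with hSQ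
    set SR := ∑ w ∈ T, adjM G u w * adjM G v w * degR G w with hSR
    have gu : gR G u = SP + SR + adjM G u v * degR G v := by
      unfold gR
      rw [sum_split u v huv, hSP, hSR, ← Finset.sum_add_distrib, adjM_self, zero_mul, zero_add, add_comm]
      congr 1
      apply Finset.sum_congr rfl; intro w _; ring
    have gv : gR G v = SQ + SR + adjM G u v * degR G u := by
      unfold gR
      rw [sum_split u v huv, hSQ, hSR, ← Finset.sum_add_distrib, adjM_self, zero_mul, add_zero, add_comm,
        adjM_symm G v u]
      congr 1
      apply Finset.sum_congr rfl; intro w _; ring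
    have gu' : gR K u = SR + adjM G u v * (degR G v + P) := by
      unfold gR
      rw [sum_split u v huv, hSR, adjM_self, zero_mul, zero_add, add_comm, kel_uv, dv]
      congr 1
      apply Finset.sum_congr rfl; intro w hw
      rw [dw w hw, kel_uw G u v huv w (hT' w hw).1 (hT' w hw).2]
    have gv' : gR K v = SP + SQ + SR + adjM G u v * (degR G u - P) := by
      unfold gR
      rw [sum_split u v huv, hSR, hSP, hSQ, adjM_self, zero_mul, add_zero, add_comm, adjM_symm K v u,
        kel_uv, du, ← Finset.sum_add_distrib, ← Finset.sum_add_distrib]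
      congr 1
      apply Finset.sum_congr rfl; intro w hw
      rw [dw w hw, kel_vw G u v huv w (hT' w hw).1 (hT' w hw).2]
      ring
    have one_le : ∀ w z, adjM G z w * 1 ≤ adjM G z w * degR G w := by
      intro w z
      rcases adjM_or G z w with e | e
      · rw [e]; simp
      · rw [e, one_mul, one_mul]
        have : adjM G w z ≤ degR G w := by
          unfold degR
          exact Finset.single_le_sum (f := fun x => adjM G w x) (fun x _ => adjM_nonneg G w x) (Finset.mem_univ z)
        rw [adjM_symm, e] at this
        exact this
    have SPP : P ≤ SP := by
      rw [hP, hSP]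
      apply Finset.sum_le_sum; intro w _
      have h1 := one_le w u
      have h2 := sub_nonneg.2 (adjM_le_one G v w)
      have := mul_le_mul_of_nonneg_right h1 h2
      linarith
    have SQQ : Q ≤ SQ := by
      rw [hQ, hSQ]
      apply Finset.sum_le_sum; intro w _
      have h1 := one_le w v
      have h2 := sub_nonneg.2 (adjM_le_one G u w)
      have := mul_le_mul_of_nonneg_right h1 h2
      linarith
    unfold WR
    rw [sum_split u v huv, sum_split u v huv (fun x => gR K x ^ 2)]
    have h1 : ∑ w ∈ T, gR G w ^ 2 ≤ ∑ w ∈ T, gR K w ^ 2 :=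
      Finset.sum_le_sum fun w hw => pow_le_pow_left₀ (gR_nonneg G w) (gw w hw) 2
    have h2 : gR G u ^ 2 + gR G v ^ 2 ≤ gR K u ^ 2 + gR K v ^ 2 := by
      have hdu : degR G u = degR G v + P - Q := by linarith
      have key : gR K u ^ 2 + gR K v ^ 2 - (gR G u ^ 2 + gR G v ^ 2)
        = 2 * (SP - adjM G u v * P) * (SQ - adjM G u v * Q) := by
        rw [gu, gv, gu', gv', hdu]; ring
      have k1 : 0 ≤ SP - adjM G u v * P := by nlinarith [adjM_le_one G u v]
      have k2 : 0 ≤ SQ - adjM G u v * Q := by nlinarith [adjM_le_one G u v]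
      have := mul_nonneg k1 k2
      linarith
    linarith
  · rw [sum_split u v huv, sum_split u v huv (fun x => degR G x ^ 2), du, dv,
      Finset.sum_congr rfl (fun w hw => show degR K w ^ 2 = degR G w ^ 2 by rw [dw w hw])]
    have hdu : degR G u = degR G v + P - Q := by linarith
    rw [hdu]; ring

/-- there is a threshold graph with at least as many walks -/
lemma exists_threshold [Fintype V] (G : SimpleGraph V) :
    ∃ H : SimpleGraph V, ∑ x, degR H x = ∑ x, degR G x ∧ WR G ≤ WR H ∧
      ∀ u v w, degR H u ≤ degR H v → w ≠ v → H.Adj u w → H.Adj v w := by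
  obtain ⟨H, ⟨hH1, hH2⟩, hmax⟩ := Set.exists_max_image
    {H : SimpleGraph V | ∑ x, degR H x = ∑ x, degR G x ∧ WR G ≤ WR H}
    (fun H => ∑ x, degR H x ^ 2) (Set.toFinite _) ⟨G, rfl, le_rfl⟩
  refine ⟨H, hH1, hH2, ?_⟩
  intro u v w huv hwv huw
  by_contra hvw
  have hne : u ≠ v := by rintro rfl; exact hvw huw
  obtain ⟨k1, k2, k3⟩ := kel_main H u v hne
  have := hmax (kel H u v hne) ⟨k1.trans hH1, hH2.trans k2⟩
  rw [k3] at this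
  set T : Finset V := univ \ {u, v} with hT
  set P := ∑ w ∈ T, adjM H u w * (1 - adjM H v w) with hP
  set Q := ∑ w ∈ T, adjM H v w * (1 - adjM H u w) with hQ
  have hP1 : 1 ≤ P := by
    have hw : w ∈ T := by simp [hT, hwv, huw.ne']
    have := Finset.single_le_sum (f := fun w => adjM H u w * (1 - adjM H v w))
      (fun x _ => mul_nonneg (adjM_nonneg H u x) (sub_nonneg.2 (adjM_le_one H v x))) hw
    refine le_trans (le_of_eq ?_) this
    simp [adjM, huw, hvw]
  have dd : degR H u - degR H v = P - Q := by
    unfold degR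
    rw [sum_split u v hne, sum_split u v hne (fun x => adjM H v x), hP, hQ,
      adjM_symm H v u, adjM_self, adjM_self, ← Finset.sum_sub_distrib]
    have : ∑ w ∈ T, (adjM H u w * (1 - adjM H v w) - adjM H v w * (1 - adjM H u w))
      = ∑ w ∈ T, adjM H u w - ∑ w ∈ T, adjM H v w := by
      rw [← Finset.sum_sub_distrib]
      apply Finset.sum_congr rfl; intro w _; ring
    rw [this]; ring
  nlinarith

set_option maxHeartbeats 1600000 in
lemma threshold_bound [Fintype V] [Nonempty V] (H : SimpleGraph V)
    (hH : ∀ u v w, degR H u ≤ degR H v → w ≠ v → H.Adj u w → H.Adj v w) :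
    ∃ c' : ℝ, (∑ x, degR H x) / (Fintype.card V : ℝ) ^ 2 ≤ c' ∧
      c' ≤ (∑ x, degR H x) / (Fintype.card V : ℝ) ^ 2 + 1 / (Fintype.card V : ℝ) ∧
      WR H ≤ (Fintype.card V : ℝ) ^ 5 * PhiW c' := by
  obtain ⟨n, hn⟩ : ∃ n : ℝ, n = Fintype.card V := ⟨_, rfl⟩
  have hnpos : 0 < n := by rw [hn]; exact_mod_cast Fintype.card_pos
  rw [← hn]
  set A : Finset V := univ.filter (fun v => ∀ w, w ≠ v → degR H v ≤ degR H w → H.Adj v w) with hA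
  set B : Finset V := univ.filter (fun v => ¬ ∀ w, w ≠ v → degR H v ≤ degR H w → H.Adj v w) with hB
  have split : ∀ F : V → ℝ, ∑ x, F x = ∑ x ∈ A, F x + ∑ x ∈ B, F x := fun F =>
    (Finset.sum_filter_add_sum_filter_not _ _ _).symm
  have cliq : ∀ u ∈ A, ∀ v ∈ A, u ≠ v → H.Adj u v := by
    intro u hu v hv huv
    rw [hA, Finset.mem_filter] at hu hv
    rcases le_total (degR H u) (degR H v) with h | h
    · exact hu.2 v huv.symm h
    · exact (hv.2 u huv h).symm
  have ind' : ∀ u ∈ B, ∀ v ∈ B, degR H u ≤ degR H v → ¬ H.Adj u v := by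
    intro u hu v hv huv hadj
    rw [hB, Finset.mem_filter] at hv
    have hv2 := hv.2
    push Not at hv2
    obtain ⟨w, hwv, hdw, hnw⟩ := hv2
    have huw : u ≠ w := by rintro rfl; exact hnw hadj.symm
    have h1 : H.Adj w u := hH v w u hdw huw hadj.symm
    exact hnw (hH u v w huv hwv h1.symm)
  have ind : ∀ u ∈ B, ∀ v ∈ B, adjM H u v = 0 := by
    intro u hu v hv
    have : ¬ H.Adj u v := by
      rcases le_total (degR H u) (degR H v) with h | h
      · exact ind' u hu v hv h
      · exact fun h' => ind' v hv u hu h h'.symm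
    simp [adjM, this]
  have cardA0 : (0 : ℝ) ≤ A.card := by positivity
  obtain ⟨p, hp⟩ : ∃ p : ℝ, p = A.card := ⟨_, rfl⟩
  have cardB : (B.card : ℝ) = n - p := by
    have := split (fun _ => 1)
    simp at this
    rw [hn, hp]; linarith
  -- degrees in B
  have degB : ∀ u ∈ B, degR H u = ∑ v ∈ A, adjM H u v := by
    intro u hu
    unfold degR
    rw [split, Finset.sum_eq_zero (s := B) (fun v hv => ind u hu v hv), add_zero]
  have degBle : ∀ u ∈ B, degR H u ≤ p := by
    intro u hu
    rw [degB u hu, hp, Finset.card_eq_sum_ones]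
    push_cast
    exact Finset.sum_le_sum fun v _ => adjM_le_one H u v
  obtain ⟨R, hR⟩ : ∃ R, R = ∑ u ∈ B, degR H u := ⟨_, rfl⟩
  have hR0 : 0 ≤ R := by rw [hR]; exact Finset.sum_nonneg fun u _ => degR_nonneg H u
  have crossR : ∑ u ∈ A, ∑ v ∈ B, adjM H u v = R := by
    rw [hR, Finset.sum_comm]
    apply Finset.sum_congr rfl
    intro v hv
    rw [degB v hv]
    exact Finset.sum_congr rfl fun u _ => adjM_symm H u v
  have AA : ∀ u ∈ A, ∑ v ∈ A, adjM H u v = p - 1 := by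
    intro u hu
    rw [← Finset.add_sum_erase A _ hu, adjM_self, zero_add]
    have : ∀ v ∈ A.erase u, adjM H u v = 1 := by
      intro v hv
      rw [Finset.mem_erase] at hv
      simp [adjM, cliq u hu v hv.2 hv.1.symm]
    rw [Finset.sum_congr rfl this, Finset.sum_const, nsmul_eq_mul, mul_one,
      Finset.cast_card_erase_of_mem hu, hp]
  have degA : ∀ u ∈ A, degR H u = p - 1 + ∑ v ∈ B, adjM H u v := by
    intro u hu
    unfold degR
    rw [split, AA u hu]
  have sumA : ∑ u ∈ A, degR H u = p * (p - 1) + R := by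
    rw [Finset.sum_congr rfl degA, Finset.sum_add_distrib, crossR, Finset.sum_const, nsmul_eq_mul, hp]
  have total : ∑ x, degR H x = p ^ 2 + 2 * R - p := by
    rw [split, sumA, ← hR]; ring
  have hRle : R ≤ p * (n - p) := by
    rw [hR, ← cardB, mul_comm, ← nsmul_eq_mul]
    exact Finset.sum_le_card_nsmul B _ _ degBle
  have hp0 : 0 ≤ p := by rw [hp]; exact cardA0
  have hpn : p ≤ n := by
    have : (0 : ℝ) ≤ B.card := by positivity
    linarith
  have degn : ∀ u, degR H u ≤ n := by
    intro u
    unfold degR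
    rw [hn, ← Finset.card_univ, Finset.card_eq_sum_ones]
    push_cast
    exact Finset.sum_le_sum fun v _ => adjM_le_one H u v
  -- vertices in A
  set T : V → ℝ := fun v => ∑ u ∈ B, (1 - adjM H v u) * degR H u with hT
  have gA : ∀ v ∈ A, gR H v ≤ p ^ 2 + 2 * R - T v := by
    intro v _
    have h1 : ∑ u ∈ A, adjM H v u * degR H u ≤ ∑ u ∈ A, degR H u := by
      apply Finset.sum_le_sum
      intro u _
      nlinarith [adjM_le_one H v u, degR_nonneg H u]
    have h2 : T v = R - ∑ u ∈ B, adjM H v u * degR H u := by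
      rw [hT, hR, ← Finset.sum_sub_distrib]
      apply Finset.sum_congr rfl; intro u _; ring
    unfold gR
    rw [split, h2]
    linarith
  have T0 : ∀ v, 0 ≤ T v := fun v => Finset.sum_nonneg fun u _ =>
    mul_nonneg (sub_nonneg.2 (adjM_le_one H v u)) (degR_nonneg H u)
  have TR : ∀ v, T v ≤ R := by
    intro v
    rw [hR, hT]
    apply Finset.sum_le_sum
    intro u _
    nlinarith [adjM_nonneg H v u, degR_nonneg H u]
  have sumT : ∑ v ∈ A, T v = ∑ u ∈ B, degR H u * (p - degR H u) := by
    rw [hT, Finset.sum_comm]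
    apply Finset.sum_congr rfl
    intro u hu
    rw [← Finset.sum_mul, Finset.sum_sub_distrib, Finset.sum_const, nsmul_eq_mul, mul_one, ← hp]
    rw [Finset.sum_congr rfl (fun v _ => adjM_symm H v u), ← degB u hu]
    ring
  have gBform : ∀ v ∈ B, gR H v = ∑ u ∈ A, adjM H v u * degR H u := by
    intro v hv
    unfold gR
    rw [split, Finset.sum_eq_zero (s := B) (fun u hu => by rw [ind v hv u hu, zero_mul]), add_zero]
  have gB1 : ∀ v ∈ B, gR H v ≤ n * degR H v := by
    intro v hv
    rw [gBform v hv, degB v hv, Finset.mul_sum]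
    apply Finset.sum_le_sum
    intro u _
    rw [mul_comm]
    exact mul_le_mul_of_nonneg_right (degn u) (adjM_nonneg H v u)
  have gB2 : ∀ v ∈ B, gR H v ≤ p * degR H v + R := by
    intro v hv
    rw [gBform v hv, degB v hv, Finset.mul_sum, ← crossR, ← Finset.sum_add_distrib]
    apply Finset.sum_le_sum
    intro u hu
    have h0 : 0 ≤ ∑ w ∈ B, adjM H u w := Finset.sum_nonneg fun w _ => adjM_nonneg H u w
    rw [degA u hu]
    nlinarith [adjM_le_one H v u, adjM_nonneg H v u]
  refine ⟨(p ^ 2 + 2 * R) / n ^ 2, ?_, ?_, ?_⟩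
  · rw [total]
    apply div_le_div_of_nonneg_right _ (by positivity)
    linarith
  · rw [total]
    have : (p ^ 2 + 2 * R - p) / n ^ 2 + 1 / n = (p ^ 2 + 2 * R - p + n) / n ^ 2 := by
      field_simp
    rw [this]
    apply div_le_div_of_nonneg_right _ (by positivity)
    linarith
  · have core := core_bound A B n (p / n) (R / n ^ 2) ((p ^ 2 + 2 * R) / n ^ 2) hnpos
      (fun v => gR H v / n ^ 2) (fun v => degR H v / n) (fun v => T v / n ^ 2)
      (by rw [← hp]; field_simp)
      (by rw [← Finset.sum_div, ← hR]; field_simp)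
      (by positivity)
      (by rw [div_le_one hnpos]; exact hpn)
      (by positivity)
      (by
        have : p / n * (1 - p / n) = p * (n - p) / n ^ 2 := by field_simp
        rw [this]
        exact div_le_div_of_nonneg_right hRle (by positivity))
      (by field_simp)
      (fun v _ => div_nonneg (degR_nonneg H v) hnpos.le)
      (fun v hv => div_le_div_of_nonneg_right (degBle v hv) hnpos.le)
      (fun v _ => div_nonneg (gR_nonneg H v) (by positivity))
      (fun v hv => by
        rw [← sub_div]
        exact div_le_div_of_nonneg_right (gA v hv) (by positivity))
      (fun v _ => div_nonneg (T0 v) (by positivity))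
      (fun v _ => div_le_div_of_nonneg_right (TR v) (by positivity))
      (by
        rw [← Finset.sum_div, sumT, Finset.sum_div]
        apply Finset.sum_congr rfl
        intro u _
        field_simp)
      (fun v _ => div_nonneg (gR_nonneg H v) (by positivity))
      (fun v hv => by
        have : degR H v / n = n * degR H v / n ^ 2 := by field_simp
        rw [this]
        exact div_le_div_of_nonneg_right (gB1 v hv) (by positivity))
      (fun v hv => by
        have : p / n * (degR H v / n) + R / n ^ 2 = (p * degR H v + R) / n ^ 2 := by field_simp
        rw [this]
        exact div_le_div_of_nonneg_right (gB2 v hv) (by positivity))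
    rw [← split (fun v => (gR H v / n ^ 2) ^ 2)] at core
    have e : ∑ v, (gR H v / n ^ 2) ^ 2 = WR H / n ^ 4 := by
      unfold WR
      rw [Finset.sum_div]
      apply Finset.sum_congr rfl
      intro v _
      rw [div_pow]; ring
    rw [e, div_le_iff₀ (by positivity)] at core
    refine core.trans (le_of_eq ?_)
    ring

/-- balanced blow-up -/
def blow (G : SimpleGraph V) (k : ℕ) : SimpleGraph (V × Fin k) := G.comap Prod.fst

lemma blow_adjM (G : SimpleGraph V) (k : ℕ) (x y : V × Fin k) :
    adjM (blow G k) x y = adjM G x.1 y.1 := by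
  unfold adjM blow; simp

lemma blow_deg [Fintype V] (G : SimpleGraph V) (k : ℕ) (x : V × Fin k) :
    degR (blow G k) x = k * degR G x.1 := by
  unfold degR
  simp only [blow_adjM]
  rw [Fintype.sum_prod_type, Finset.mul_sum]
  simp

lemma blow_g [Fintype V] (G : SimpleGraph V) (k : ℕ) (x : V × Fin k) :
    gR (blow G k) x = k ^ 2 * gR G x.1 := by
  unfold gR
  simp only [blow_adjM, blow_deg]
  rw [Fintype.sum_prod_type, Finset.mul_sum]
  simp
  apply Finset.sum_congr rfl; intro v _; ring

lemma blow_W [Fintype V] (G : SimpleGraph V) (k : ℕ) :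
    WR (blow G k) = k ^ 5 * WR G := by
  unfold WR
  simp only [blow_g]
  rw [Fintype.sum_prod_type, Finset.mul_sum]
  simp
  apply Finset.sum_congr rfl; intro v _; ring

lemma blow_S [Fintype V] (G : SimpleGraph V) (k : ℕ) :
    ∑ x, degR (blow G k) x = k ^ 2 * ∑ x, degR G x := by
  simp only [blow_deg]
  rw [Fintype.sum_prod_type, Finset.mul_sum]
  simp
  apply Finset.sum_congr rfl; intro v _; ring

lemma PhiW_continuous : Continuous PhiW := by
  unfold PhiW
  have : Continuous fun c : ℝ => c ^ ((5 : ℝ) / 2) := Real.continuous_rpow_const (by norm_num)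
  fun_prop

lemma WR_bound [Fintype V] [Nonempty V] (G : SimpleGraph V) :
    WR G ≤ (Fintype.card V : ℝ) ^ 5 * PhiW ((∑ x, degR G x) / (Fintype.card V : ℝ) ^ 2) := by
  obtain ⟨n, hn⟩ : ∃ n : ℝ, n = Fintype.card V := ⟨_, rfl⟩
  have hnpos : 0 < n := by rw [hn]; exact_mod_cast Fintype.card_pos
  rw [← hn]
  set c := (∑ x, degR G x) / n ^ 2 with hc
  have step : ∀ k : ℕ, ∃ c' : ℝ, c ≤ c' ∧ c' ≤ c + (1 / n) * (1 / ((k : ℝ) + 1)) ∧ WR G ≤ n ^ 5 * PhiW c' := by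
    intro k
    obtain ⟨H, h1, h2, h3⟩ := exists_threshold (blow G (k + 1))
    obtain ⟨c', e1, e2, e3⟩ := threshold_bound H h3
    have hk : (0 : ℝ) < (k : ℝ) + 1 := by positivity
    have hcard : (Fintype.card (V × Fin (k + 1)) : ℝ) = n * (k + 1) := by
      rw [Fintype.card_prod, Fintype.card_fin, hn]; push_cast; ring
    rw [h1, blow_S, hcard] at e1 e2
    rw [hcard] at e3
    push_cast at e1 e2
    have hcc : ((k : ℝ) + 1) ^ 2 * (∑ x, degR G x) / (n * (k + 1)) ^ 2 = c := by
      rw [hc]; field_simp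
    rw [hcc] at e1 e2
    refine ⟨c', e1, ?_, ?_⟩
    · refine e2.trans (le_of_eq ?_)
      field_simp
    · rw [blow_W] at h2
      push_cast at h2
      have h4 := h2.trans e3
      have : (n * ((k : ℝ) + 1)) ^ 5 * PhiW c' = ((k : ℝ) + 1) ^ 5 * (n ^ 5 * PhiW c') := by ring
      rw [this] at h4
      exact le_of_mul_le_mul_left h4 (by positivity)
  choose f hf1 hf2 hf3 using step
  have lim : Filter.Tendsto f Filter.atTop (nhds c) := by
    refine tendsto_of_tendsto_of_tendsto_of_le_of_le tendsto_const_nhds ?_ hf1 hf2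
    have := (tendsto_one_div_add_atTop_nhds_zero_nat (𝕜 := ℝ)).const_mul (1 / n)
    have := this.const_add c
    simpa using this
  have lim2 : Filter.Tendsto (fun k => n ^ 5 * PhiW (f k)) Filter.atTop (nhds (n ^ 5 * PhiW c)) :=
    ((PhiW_continuous.tendsto c).comp lim).const_mul _
  exact ge_of_tendsto' lim2 hf3

lemma sum_fin_succ [Fintype V] (k : ℕ) (F : (Fin (k + 1) → V) → ℝ) :
    ∑ f, F f = ∑ a : V, ∑ g : Fin k → V, F (Fin.cons a g) := by
  rw [← (Fin.consEquiv (fun _ : Fin (k + 1) => V)).sum_comp, Fintype.sum_prod_type]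
  rfl

end graphpart

open Classical in
lemma walkCount4_eq {V : Type*} [Fintype V] (G : SimpleGraph V) : (walkCount4 G : ℝ) = WR G := by
  have h1 : (walkCount4 G : ℝ) = ∑ f : Fin 5 → V, ∏ i : Fin 4, adjM G (f i.castSucc) (f i.succ) := by
    unfold walkCount4
    rw [Nat.card_eq_fintype_card, Fintype.card_subtype, Finset.card_filter]
    push_cast
    apply Finset.sum_congr rfl
    intro f _
    unfold adjM
    rw [Finset.prod_ite_zero]
    simp
  rw [h1]
  simp only [sum_fin_succ, Fin.prod_univ_four]
  simp only [Finset.univ_unique, Finset.sum_singleton]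
  have h2 : ∀ a0 a1 a2 a3 a4 : V, ∀ z : Fin 0 → V,
     let f : Fin 5 → V := Fin.cons a0 (Fin.cons a1 (Fin.cons a2 (Fin.cons a3 (Fin.cons a4 z))))
     adjM G (f (Fin.castSucc 0)) (f (Fin.succ 0)) * adjM G (f (Fin.castSucc 1)) (f (Fin.succ 1)) *
      adjM G (f (Fin.castSucc 2)) (f (Fin.succ 2)) * adjM G (f (Fin.castSucc 3)) (f (Fin.succ 3))
     = adjM G a0 a1 * adjM G a1 a2 * adjM G a2 a3 * adjM G a3 a4 := by
    intros; rfl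
  have h3 : ∀ a0 a1 a2 : V, ∑ a3, ∑ a4, adjM G a0 a1 * adjM G a1 a2 * adjM G a2 a3 * adjM G a3 a4
      = adjM G a0 a1 * adjM G a1 a2 * gR G a2 := by
    intro a0 a1 a2
    unfold gR degR
    rw [Finset.mul_sum]
    apply Finset.sum_congr rfl; intro a3 _
    rw [← Finset.mul_sum]; ring
  calc _ = ∑ a0, ∑ a1, ∑ a2, ∑ a3, ∑ a4, adjM G a0 a1 * adjM G a1 a2 * adjM G a2 a3 * adjM G a3 a4 := by
        refine Finset.sum_congr rfl fun a0 _ => Finset.sum_congr rfl fun a1 _ => Finset.sum_congr rfl fun a2 _ =>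
          Finset.sum_congr rfl fun a3 _ => Finset.sum_congr rfl fun a4 _ => ?_
        exact h2 a0 a1 a2 a3 a4 _
    _ = ∑ a0, ∑ a1, ∑ a2, adjM G a0 a1 * adjM G a1 a2 * gR G a2 := by simp only [h3]
    _ = ∑ a1, ∑ a2, ∑ a0, adjM G a0 a1 * adjM G a1 a2 * gR G a2 := by
        rw [Finset.sum_comm]
        exact Finset.sum_congr rfl fun a1 _ => Finset.sum_comm
    _ = ∑ a2, ∑ a1, ∑ a0, adjM G a0 a1 * adjM G a1 a2 * gR G a2 := Finset.sum_comm
    _ = WR G := by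
        unfold WR
        apply Finset.sum_congr rfl; intro a2 _
        rw [sq]
        nth_rw 2 [gR]
        rw [Finset.sum_mul]
        apply Finset.sum_congr rfl; intro a1 _
        unfold degR
        rw [← Finset.sum_mul, ← Finset.sum_mul, adjM_symm G a2 a1,
          Finset.sum_congr rfl (fun x _ => adjM_symm G x a1)]
        ring

open Classical in
lemma sum_degR {V : Type*} [Fintype V] (G : SimpleGraph V) :
    ∑ x, degR G x = 2 * (Nat.card G.edgeSet : ℝ) := by
  have h1 : ∀ x, degR G x = (G.degree x : ℝ) := by
    intro x
    unfold degR adjM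
    rw [← SimpleGraph.card_neighborFinset_eq_degree, SimpleGraph.neighborFinset_eq_filter, Finset.card_filter]
    push_cast; rfl
  simp only [h1]
  rw [Nat.card_eq_fintype_card, ← SimpleGraph.edgeFinset_card]
  exact_mod_cast G.sum_degrees_eq_twice_card_edges

theorem walk4_upper_bound {V : Type*} [Fintype V] (G : SimpleGraph V)
    (n e : ℕ) (hn : n = Fintype.card V) (he : e = Nat.card G.edgeSet)
    (c : ℝ) (hc : c = 2 * e / (n : ℝ) ^ 2) :
    (walkCount4 G : ℝ) ≤
      max ((1 - Real.sqrt (1 - c)) ^ 2 * ((c + 1) * Real.sqrt (1 - c) + c))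
        (c ^ ((5 : ℝ) / 2)) * (n : ℝ) ^ 5 := by
  rw [walkCount4_eq]
  rcases isEmpty_or_nonempty V with h | h
  · have : WR G = 0 := by unfold WR; simp
    rw [this, hn]
    simp
  · have := WR_bound G
    rw [sum_degR, ← he, ← hn, ← hc, mul_comm] at this
    exact this
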